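/- Let Y be a metric space, let A be an absolute retract, let a < b be real numbers, and let M ⊆ Y be a closed subset homeomorphic to the cylinder C = [a,b] × A via a homeomorphism h : M → [a,b] × A. Define M_l = h⁻¹({a} × A) and M_r = h⁻¹({b} × A). Let N ⊆ Y and let φ : N → Y be a map. Suppose there exists a closed set V ⊆ M ∩ N such that: (i) φ restricted to V is compact; (ii) for every path σ : [0,1] → Y with support contained in M and with support intersecting both M_l and M_r, there exists a sub-path γ of σ whose support is contained in V and such that φ(γ) ⊆ M, φ(γ) ∩ M_l ≠ ∅ and φ(γ) ∩ M_r ≠ ∅. Then there exists z̃ ∈ V such that φ(z̃) = z̃. -/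

import Mathlib

/-!
The set of points of the cylinder whose image under `φ` lies in `M` and has the same first
coordinate is closed and, by the intermediate value theorem applied to the stretched sub-paths,
meets every path from the left base to the right base. It remains to find in such a crossing set
a point whose `A`-coordinate is preserved too.

The compact set `K ⊆ A` of `A`-coordinates of the images embeds in the Hilbert cube by a map `e`,
and since `A` is an absolute retract there is `r : (ℕ → ℝ) → A` with `r ∘ e = id` on `K`
(`exists_embedding_compact`, `exists_retraction`). Pulling everything back along
`(t, q) ↦ (t, r q)` replaces `A` by the Hilbert cube, and truncating coordinates replaces the
Hilbert cube by a finite-dimensional cube (`exists_fixed_of_crossing_nat`).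

In finite dimension (`exists_fixed_of_crossing`), let `Z ⊆ [a, b] × [0, 1]ᵐ` be a closed set
meeting all left-right paths, and let `u` be the distance to `Z`, with a positive sign on the points
that can be joined to the left face off `Z` and a negative sign elsewhere. Then `u` is continuous,
vanishes only on `Z`, and is nonnegative on the left face and nonpositive on the right one. A
Brouwer fixed point of `(t, x) ↦ (t + u (t, x), F (t, x))`, with the first coordinate clamped to
`[a, b]`, must be a zero of `u`, hence a point of `Z` with `F (t, x) = x`.

Brouwer's theorem itself (`brouwer`) is proved by the Milnor–Rogers volume argument
(`no_retraction`): for a `C¹` retraction `g` of a ball onto its boundary sphere, the integral over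
the ball of `det (1 + t (Dg - 1))` is polynomial in `t` and equals the volume of the ball for small
`t > 0`, so also for `t = 1`, where however `det Dg = 0`.
-/


open Set

/-- A metrizable space `A` is an absolute retract if every continuous map from a
closed subset of a metric space into `A` extends continuously to the whole space. -/
def IsAbsoluteRetract (A : Type*) [TopologicalSpace A] : Prop :=
  TopologicalSpace.MetrizableSpace A ∧
  ∀ (Y : Type*) [MetricSpace Y] (M : Set Y), IsClosed M →
    ∀ f : M → A, Continuous f →
      ∃ g : Y → A, Continuous g ∧ ∀ m : M, g m = f m

/-! ### Brouwer's fixed point theorem -/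

open Polynomial in
/-- The value at `1` of a polynomial of degree at most `n` is a fixed linear combination of its
values at suitable points of `(0, ε)`; by Lagrange interpolation. -/
theorem exists_extrapolation (n : ℕ) {ε : ℝ} (hε : 0 < ε) :
    ∃ c t : ℕ → ℝ, (∀ i, 0 < t i ∧ t i < ε) ∧ ∀ p : ℝ[X], p.natDegree ≤ n →
      p.eval 1 = ∑ i ∈ Finset.range (n + 1), c i * p.eval (t i) := by
  have ht : Function.Injective fun i : ℕ => ε / ((i : ℝ) + 2) := by
    intro i j hij
    have hi : (0 : ℝ) < (i : ℝ) + 2 := by positivity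
    have hj : (0 : ℝ) < (j : ℝ) + 2 := by positivity
    simp only at hij
    rw [div_eq_div_iff hi.ne' hj.ne'] at hij
    have := mul_left_cancel₀ hε.ne' hij
    exact_mod_cast (add_right_cancel this).symm
  refine ⟨fun i => (Lagrange.basis (Finset.range (n + 1)) (fun i : ℕ => ε / ((i : ℝ) + 2)) i).eval 1,
    fun i => ε / ((i : ℝ) + 2), fun i => ⟨by positivity, ?_⟩, fun p hp => ?_⟩
  · apply div_lt_self hε
    have : (0 : ℝ) ≤ i := by positivity
    linarith
  · have hdeg : p.degree < (Finset.range (n + 1)).card := by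
      rw [Finset.card_range]
      exact lt_of_le_of_lt (degree_le_of_natDegree_le hp) (by exact_mod_cast Nat.lt_succ_self n)
    have h := Lagrange.eq_interpolate (v := fun i : ℕ => ε / ((i : ℝ) + 2)) ht.injOn hdeg
    conv_lhs => rw [h]
    rw [Lagrange.interpolate_apply, eval_finsetSum]
    refine Finset.sum_congr rfl fun i _ => ?_
    rw [eval_mul, eval_C, mul_comm]

open Polynomial in
theorem exists_poly_det {E : Type*} [NormedAddCommGroup E] [NormedSpace ℝ E]
    [FiniteDimensional ℝ E] (A : E →L[ℝ] E) :
    ∃ p : ℝ[X], p.natDegree ≤ Module.finrank ℝ E ∧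
      ∀ t : ℝ, p.eval t = (ContinuousLinearMap.id ℝ E + t • A).det := by
  classical
  let b := Module.finBasis ℝ E
  let M := LinearMap.toMatrix b b (A : E →ₗ[ℝ] E)
  refine ⟨Matrix.det ((X : ℝ[X]) • M.map C + (1 : Matrix _ _ ℝ).map C), ?_, fun t => ?_⟩
  · simpa using natDegree_det_X_add_C_le M 1
  · have h : (ContinuousLinearMap.id ℝ E + t • A).det
        = (LinearMap.toMatrix b b
            ((ContinuousLinearMap.id ℝ E + t • A : E →L[ℝ] E) : E →ₗ[ℝ] E)).det := by
      rw [LinearMap.det_toMatrix]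
    have h2 : LinearMap.toMatrix b b
        ((ContinuousLinearMap.id ℝ E + t • A : E →L[ℝ] E) : E →ₗ[ℝ] E) = 1 + t • M := by
      have h3 : ((ContinuousLinearMap.id ℝ E + t • A : E →L[ℝ] E) : E →ₗ[ℝ] E)
          = LinearMap.id + t • (A : E →ₗ[ℝ] E) := rfl
      rw [h3, map_add, map_smul, LinearMap.toMatrix_id]
    rw [h, h2, ← coe_evalRingHom, RingHom.map_det]
    congr 1
    ext i j
    rw [add_comm]
    by_cases hij : i = j
    · subst hij
      simp [mul_comm (M i i)]
    · simp [hij, mul_comm (M i j)]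

/-- The determinant is nonzero along the segment from `1` to `1 + A`, so it keeps its sign. -/
theorem det_id_add_pos {E : Type*} [NormedAddCommGroup E] [NormedSpace ℝ E]
    [FiniteDimensional ℝ E] (A : E →L[ℝ] E) (hA : ‖A‖ < 1) :
    0 < (ContinuousLinearMap.id ℝ E + A).det := by
  by_contra! hneg
  have hc : Continuous fun s : ℝ => (ContinuousLinearMap.id ℝ E + s • A).det := by
    exact ContinuousLinearMap.continuous_det.comp (by fun_prop)
  obtain ⟨s, hs, hs0⟩ := intermediate_value_Icc' (zero_le_one' ℝ) hc.continuousOn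
    (show (0 : ℝ) ∈ Icc _ _ from ⟨by simpa using hneg, by
      simp only [zero_smul, add_zero]
      rw [ContinuousLinearMap.det]; simp⟩)
  obtain ⟨v, hv, hv0⟩ := (Submodule.ne_bot_iff _).1
    (LinearMap.bot_lt_ker_of_det_eq_zero (f := ((ContinuousLinearMap.id ℝ E + s • A : E →L[ℝ] E) : E →ₗ[ℝ] E)) hs0).ne'
  have hv1 : v + s • A v = 0 := by simpa using hv
  have h1 : ‖v‖ ≤ ‖A‖ * ‖v‖ := by
    calc ‖v‖ = ‖s • A v‖ := by rw [← norm_neg, ← eq_neg_of_add_eq_zero_right hv1]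
      _ = |s| * ‖A v‖ := by rw [norm_smul, Real.norm_eq_abs]
      _ ≤ 1 * ‖A v‖ := by gcongr; exact abs_le.2 ⟨by linarith [hs.1], hs.2⟩
      _ ≤ ‖A‖ * ‖v‖ := by rw [one_mul]; exact A.le_opNorm v
  have h2 : 0 < ‖v‖ := norm_pos_iff.2 hv0
  nlinarith

/-- Differentiating `‖g‖² = R²` shows that `g x` is orthogonal to the range of `Dg x`, so that
`Dg x` is not surjective. -/
theorem det_eq_zero_of_norm_const {E : Type*} [NormedAddCommGroup E] [InnerProductSpace ℝ E] [FiniteDimensional ℝ E]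
    {R : ℝ} (hR : 0 < R)
    {g : E → E} (hg : Differentiable ℝ g)
    (hgR : ∀ x, ‖g x‖ = R) (x : E) : (fderiv ℝ g x).det = 0 := by
  by_contra hdet
  let e := LinearMap.equivOfDetNeZero (fderiv ℝ g x : E →ₗ[ℝ] E) hdet
  obtain ⟨v, hv⟩ := e.surjective (g x)
  have hv : fderiv ℝ g x v = g x := hv
  have h1 : HasFDerivAt (fun y => inner ℝ (g y) (g y)) _ x :=
    (hg x).hasFDerivAt.inner ℝ (hg x).hasFDerivAt
  have h2 : (fun y => inner ℝ (g y) (g y)) = fun _ => R ^ 2 := by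
    funext y; rw [real_inner_self_eq_norm_sq, hgR]
  rw [h2] at h1
  have h3 := congrArg (fun L => L v) (h1.unique (hasFDerivAt_const (R ^ 2) x))
  simp [hv, hgR] at h3
  linarith

/-- For small `t > 0` the map `x ↦ x + t (g x - x)` is a bijection of the ball onto itself: extended
by the identity outside the ball it is a Lipschitz-small perturbation of the identity. The change of
variables formula then computes the volume of the ball. -/
theorem integral_det_eq {E : Type*} [NormedAddCommGroup E] [InnerProductSpace ℝ E] [FiniteDimensional ℝ E]
    [MeasurableSpace E] [BorelSpace E] {R : ℝ} (hR : 0 < R)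
    {g : E → E} (hg : ContDiff ℝ 1 g)
    (hgR : ∀ x, ‖g x‖ = R) (hgid : ∀ x, ‖x‖ = R → g x = x) :
    ∃ ε : ℝ, 0 < ε ∧ ∀ t : ℝ, 0 < t → t < ε →
      ∫ x in Metric.closedBall (0 : E) R,
        (ContinuousLinearMap.id ℝ _ + t • (fderiv ℝ g x - ContinuousLinearMap.id ℝ _)).det
      = MeasureTheory.volume.real (Metric.closedBall (0 : E) R) := by
  classical
  set B := Metric.closedBall (0 : E) R with hB
  have hBc : IsCompact B := isCompact_closedBall _ _
  have hcont : Continuous fun x => fderiv ℝ g x - ContinuousLinearMap.id ℝ E :=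
    (hg.continuous_fderiv (by norm_num)).sub continuous_const
  obtain ⟨C, hC⟩ := hBc.exists_bound_of_continuousOn hcont.continuousOn
  have hC0 : 0 ≤ C := (norm_nonneg _).trans (hC 0 (by simp [hB, hR.le]))
  have hderiv : ∀ x, HasFDerivAt (fun y => g y - y) (fderiv ℝ g x - ContinuousLinearMap.id ℝ E) x :=
    fun x => ((hg.differentiable (by norm_num)) x).hasFDerivAt.sub (hasFDerivAt_id x)
  have hLipB : ∀ x ∈ B, ∀ y ∈ B, ‖(g y - y) - (g x - x)‖ ≤ C * ‖y - x‖ := fun x hx y hy =>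
    (convex_closedBall (0 : E) R).norm_image_sub_le_of_norm_hasFDerivWithin_le
      (fun z _ => (hderiv z).hasFDerivWithinAt) hC hx hy
  -- `k` extends the displacement `g x - x` by zero outside the ball
  let k : E → E := fun x => if x ∈ B then g x - x else 0
  -- a segment from `x ∈ B` to `y ∉ B` crosses the sphere, where `g x - x` vanishes
  have hmix : ∀ x ∈ B, ∀ y ∉ B, ‖g x - x‖ ≤ C * ‖y - x‖ := by
    intro x hx y hy
    have hx' : ‖x‖ ≤ R := by simpa [hB] using hx
    have hy' : R < ‖y‖ := by simpa [hB] using hy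
    have hc : Continuous fun s : ℝ => ‖x + s • (y - x)‖ := by fun_prop
    obtain ⟨s, hs, hsR⟩ := intermediate_value_Icc (zero_le_one' ℝ) hc.continuousOn
      (show R ∈ Icc _ _ from ⟨by simpa using hx', by simpa using hy'.le⟩)
    have hz := hgid _ hsR
    have h1 := hLipB (x + s • (y - x)) (by simpa [hB] using hsR.le) x hx
    rw [hz, sub_self, sub_zero] at h1
    refine h1.trans (mul_le_mul_of_nonneg_left ?_ hC0)
    rw [sub_add_cancel_left, norm_neg, norm_smul, Real.norm_eq_abs, abs_of_nonneg hs.1]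
    exact mul_le_of_le_one_left (norm_nonneg _) hs.2
  have hkLip : ∀ x y, ‖k x - k y‖ ≤ C * ‖x - y‖ := by
    intro x y
    by_cases hx : x ∈ B <;> by_cases hy : y ∈ B
    · simpa [k, hx, hy] using hLipB y hy x hx
    · simpa [k, hx, hy, norm_sub_rev] using hmix x hx y hy
    · simpa [k, hx, hy, norm_sub_rev] using hmix y hy x hx
    · simp [k, hx, hy]; positivity
  refine ⟨1 / (C + 1), by positivity, fun t ht0 ht => ?_⟩
  have htC : t * (C + 1) < 1 := by rwa [lt_div_iff₀ (by positivity)] at ht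
  have ht1 : t < 1 := by nlinarith
  have htC' : t * C < 1 := by nlinarith
  let G : E → E := fun x => x + t • (g x - x)
  have hGB : MapsTo G B B := by
    intro x hx
    have : G x = (1 - t) • x + t • g x := by simp only [G]; module
    rw [this]
    exact (convex_closedBall (0 : E) R) hx (by simp [hgR]) (by linarith) ht0.le (by ring)
  have hinj : InjOn G B := by
    intro x hx y hy hxy
    have h1 : x - y = t • (k y - k x) := by
      have hxy : x + t • (g x - x) = y + t • (g y - y) := hxy
      simp only [k, hx, hy, if_true]
      rw [smul_sub]
      rw [sub_eq_sub_iff_add_eq_add, hxy, add_comm]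
    have h2 : ‖x - y‖ ≤ t * (C * ‖x - y‖) := by
      calc ‖x - y‖ = ‖t • (k y - k x)‖ := by rw [← h1]
        _ = t * ‖k y - k x‖ := by rw [norm_smul, Real.norm_eq_abs, abs_of_pos ht0]
        _ ≤ t * (C * ‖y - x‖) := by gcongr; exact hkLip y x
        _ = _ := by rw [norm_sub_rev y x]
    by_contra hne
    have : 0 < ‖x - y‖ := norm_pos_iff.2 (sub_ne_zero.2 hne)
    nlinarith
  -- a preimage of `y` under `x ↦ x + t k x` is a fixed point of the contraction `x ↦ y - t k x`
  have hsurj : B ⊆ G '' B := by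
    intro y hy
    have hcw : ContractingWith (Real.toNNReal (t * C)) fun x => y - t • k x := by
      refine ⟨by rwa [Real.toNNReal_lt_one], LipschitzWith.of_dist_le_mul fun x z => ?_⟩
      rw [dist_eq_norm, dist_eq_norm, sub_sub_sub_cancel_left, ← smul_sub, norm_smul,
        Real.norm_eq_abs, abs_of_pos ht0, norm_sub_rev, Real.coe_toNNReal _ (by positivity),
        mul_assoc]
      gcongr
      exact hkLip x z
    have hfix := hcw.fixedPoint_isFixedPt
    set x := hcw.fixedPoint
    have hx : y - t • k x = x := hfix
    have hxB : x ∈ B := by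
      by_contra hxB
      have : y = x := by simpa [k, hxB] using hx
      exact hxB (this ▸ hy)
    refine ⟨x, hxB, ?_⟩
    simp only [k, hxB, if_true] at hx
    simp only [G]
    rw [← eq_sub_iff_add_eq, hx]
  have himage : G '' B = B := subset_antisymm hGB.image_subset hsurj
  have hvol := MeasureTheory.integral_image_eq_integral_abs_det_fderiv_smul MeasureTheory.volume
    (s := B) (f := G) hBc.measurableSet
    (f' := fun x => ContinuousLinearMap.id ℝ E + t • (fderiv ℝ g x - ContinuousLinearMap.id ℝ E))
    (fun x _ => ((hasFDerivAt_id x).add ((hderiv x).const_smul t)).hasFDerivWithinAt)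
    hinj (fun _ => (1 : ℝ))
  rw [himage] at hvol
  simp only [MeasureTheory.integral_const, smul_eq_mul, mul_one, MeasureTheory.measureReal_restrict_apply_univ] at hvol
  rw [hvol]
  refine MeasureTheory.setIntegral_congr_fun hBc.measurableSet fun x hx => ?_
  refine (abs_of_pos (det_id_add_pos _ ?_)).symm
  rw [norm_smul, Real.norm_eq_abs, abs_of_pos ht0]
  exact (mul_le_mul_of_nonneg_left (hC x hx) ht0.le).trans_lt htC'

/-- There is no `C¹` retraction of the ball of radius `R` onto its boundary sphere. -/
theorem no_retraction {E : Type*} [NormedAddCommGroup E] [InnerProductSpace ℝ E] [FiniteDimensional ℝ E]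
    [MeasurableSpace E] [BorelSpace E] {R : ℝ} (hR : 0 < R)
    {g : E → E} (hg : ContDiff ℝ 1 g)
    (hgR : ∀ x, ‖g x‖ = R) (hgid : ∀ x, ‖x‖ = R → g x = x) : False := by
  obtain ⟨ε, hε, hint⟩ := integral_det_eq hR hg hgR hgid
  obtain ⟨c, t, ht, hct⟩ := exists_extrapolation (Module.finrank ℝ E) hε
  set B := Metric.closedBall (0 : E) R with hB
  have hBc : IsCompact B := isCompact_closedBall _ _
  have hcont : Continuous fun x => fderiv ℝ g x - ContinuousLinearMap.id ℝ E :=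
    (hg.continuous_fderiv (by norm_num)).sub continuous_const
  have hzero : ∀ x, (∑ i ∈ Finset.range (Module.finrank ℝ E + 1), c i *
      (ContinuousLinearMap.id ℝ E + t i • (fderiv ℝ g x - ContinuousLinearMap.id ℝ E)).det) = 0 := by
    intro x
    obtain ⟨p, hp, hpt⟩ := exists_poly_det (fderiv ℝ g x - ContinuousLinearMap.id ℝ E)
    have h := hct p hp
    simp only [hpt, one_smul] at h
    rw [← h, add_sub_cancel, det_eq_zero_of_norm_const hR (hg.differentiable (by norm_num)) hgR]
  have hsum : ∑ i ∈ Finset.range (Module.finrank ℝ E + 1), c i = 1 := by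
    have := hct 1 (by simp)
    simpa using this.symm
  have hvol : 0 < MeasureTheory.volume.real B :=
    ENNReal.toReal_pos (Metric.measure_closedBall_pos _ _ hR).ne' hBc.measure_lt_top.ne
  have h0 : ∫ x in B, (∑ i ∈ Finset.range (Module.finrank ℝ E + 1), c i *
      (ContinuousLinearMap.id ℝ E + t i • (fderiv ℝ g x - ContinuousLinearMap.id ℝ E)).det) = 0 := by
    simp [hzero]
  rw [MeasureTheory.integral_finsetSum] at h0
  · simp only [MeasureTheory.integral_const_mul] at h0
    rw [Finset.sum_congr rfl fun i _ => by rw [hint (t i) (ht i).1 (ht i).2],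
      ← Finset.sum_mul, hsum, one_mul] at h0
    exact hvol.ne' h0
  · intro i _
    refine ContinuousOn.integrableOn_compact hBc (Continuous.continuousOn ?_)
    exact continuous_const.mul (ContinuousLinearMap.continuous_det.comp (by fun_prop))

/-- If `f` had no fixed point, then cutting it off with a bump function `χ` and normalizing
`x - χ x • f x` would give a retraction onto a sphere. -/
theorem brouwer_smooth {E : Type*} [NormedAddCommGroup E] [InnerProductSpace ℝ E]
    [FiniteDimensional ℝ E] {f : E → E} (hf : ContDiff ℝ 1 f) {r : ℝ} (hr : 0 < r)
    (hfr : ∀ x, ‖f x‖ ≤ r) : ∃ x, f x = x := by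
  borelize E
  by_contra! hne
  let χ : ContDiffBump (0 : E) := ⟨r, 2 * r, hr, by linarith⟩
  let G : E → E := fun x => x - χ x • f x
  have hG0 : ∀ x, G x ≠ 0 := by
    intro x hx
    have hx : x = χ x • f x := sub_eq_zero.1 hx
    have hxr : ‖x‖ ≤ r := by
      rw [hx, norm_smul, Real.norm_eq_abs, abs_of_nonneg χ.nonneg]
      exact (mul_le_of_le_one_left (norm_nonneg _) χ.le_one).trans (hfr x)
    rw [χ.one_of_mem_closedBall (by simpa [χ] using hxr), one_smul] at hx
    exact hne x hx.symm
  have hG : ContDiff ℝ 1 G := contDiff_id.sub (χ.contDiff.smul hf)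
  have h2r : (0 : ℝ) < 2 * r := by positivity
  refine no_retraction (g := fun x => (2 * r / ‖G x‖) • G x) h2r ?_ (fun x => ?_) fun x hx => ?_
  · exact (contDiff_const.div (hG.norm ℝ hG0) fun x => norm_ne_zero_iff.2 (hG0 x)).smul hG
  · rw [norm_smul, Real.norm_eq_abs, abs_of_nonneg (by positivity)]
    exact div_mul_cancel₀ _ (norm_ne_zero_iff.2 (hG0 x))
  · have : G x = x := by
      simp only [G]
      rw [χ.zero_of_le_dist (by simp [χ, hx]), zero_smul, sub_zero]
    simp only [this, hx]
    rw [div_self h2r.ne', one_smul]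

/-- The continuous case follows by smooth approximation and compactness. -/
theorem brouwer_euclidean {E : Type*} [NormedAddCommGroup E] [InnerProductSpace ℝ E]
    [FiniteDimensional ℝ E] {f : E → E} (hf : Continuous f) {r : ℝ}
    (hfr : ∀ x, ‖f x‖ ≤ r) : ∃ x, f x = x := by
  have hr : 0 ≤ r := (norm_nonneg _).trans (hfr 0)
  have happ : ∀ n : ℕ, ∃ x : E, ‖x‖ ≤ r + 1 ∧ dist x (f x) < 1 / ((n : ℝ) + 1) := by
    intro n
    have hn : (0 : ℝ) < 1 / ((n : ℝ) + 1) := by positivity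
    have hn1 : 1 / ((n : ℝ) + 1) ≤ 1 := by
      rw [div_le_one (by positivity)]; linarith [(Nat.cast_nonneg n : (0 : ℝ) ≤ n)]
    obtain ⟨g, hg, hgf, -⟩ := hf.exists_contDiff_approx 1 (continuous_const (y := 1 / ((n : ℝ) + 1)))
      (fun _ => hn)
    have hgr : ∀ x, ‖g x‖ ≤ r + 1 := fun x => by
      have h1 := hgf x
      rw [dist_eq_norm] at h1
      have h2 := norm_le_insert' (g x) (f x)
      linarith [hfr x]
    obtain ⟨x, hx⟩ := brouwer_smooth (by exact_mod_cast hg) (by linarith) hgr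
    refine ⟨x, ?_, ?_⟩
    · rw [← hx]; exact hgr x
    · have := hgf x
      rwa [hx] at this
  choose x hx hxf using happ
  obtain ⟨y, -, θ, hθ, hy⟩ := (isCompact_closedBall (0 : E) (r + 1)).tendsto_subseq
    (x := x) (fun n => by simpa using hx n)
  refine ⟨y, ?_⟩
  have h1 : Filter.Tendsto (fun n => dist (x (θ n)) (f (x (θ n)))) Filter.atTop (nhds (dist y (f y))) :=
    hy.dist ((hf.tendsto y).comp hy)
  have h2 : Filter.Tendsto (fun n => dist (x (θ n)) (f (x (θ n)))) Filter.atTop (nhds 0) :=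
    squeeze_zero (fun _ => dist_nonneg) (fun n => (hxf (θ n)).le)
      (tendsto_one_div_add_atTop_nhds_zero_nat.comp hθ.tendsto_atTop)
  exact (dist_eq_zero.1 (tendsto_nhds_unique h1 h2)).symm

/-- **Brouwer's fixed point theorem**, for bounded continuous self-maps of a finite-dimensional
normed space. -/
theorem brouwer {E : Type*} [NormedAddCommGroup E] [NormedSpace ℝ E]
    [FiniteDimensional ℝ E] {f : E → E} (hf : Continuous f) {r : ℝ}
    (hfr : ∀ x, ‖f x‖ ≤ r) : ∃ x, f x = x := by
  let e := toEuclidean (E := E)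
  let L : E →L[ℝ] EuclideanSpace ℝ (Fin (Module.finrank ℝ E)) := e
  obtain ⟨y, hy⟩ := brouwer_euclidean (f := fun y => e (f (e.symm y))) (by fun_prop)
    (r := ‖L‖ * r) (fun y => (L.le_opNorm (f (e.symm y))).trans
      (mul_le_mul_of_nonneg_left (hfr _) (norm_nonneg _)))
  exact ⟨e.symm y, (e.eq_symm_apply.2 hy)⟩

/-! ### Crossing sets in a cylinder over a cube -/

/-- A closed set `Z` meeting all paths of `[a, b] × [0, 1]ᵐ` that join the two bases contains a
point where the second coordinate is fixed by a given map `F` into the cube. -/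
theorem exists_fixed_of_crossing {m : ℕ} {a b : ℝ} (hab : a ≤ b)
    (Z : Set (ℝ × (Fin m → ℝ))) (hZ : IsClosed Z)
    (F : ℝ × (Fin m → ℝ) → Fin m → ℝ) (hF : Continuous F) (hF01 : ∀ p, F p ∈ Icc 0 1)
    (hcross : ∀ σ : ℝ → ℝ × (Fin m → ℝ), Continuous σ → (∀ s, σ s ∈ Icc a b ×ˢ Icc 0 1) →
      (σ 0).1 = a → (σ 1).1 = b → ∃ s ∈ Icc (0 : ℝ) 1, σ s ∈ Z) :
    ∃ p ∈ Z, p.1 ∈ Icc a b ∧ F p = p.2 := by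
  classical
  set S : Set (ℝ × (Fin m → ℝ)) := Icc a b ×ˢ Icc 0 1 with hS
  have hSconv : Convex ℝ S := (convex_Icc a b).prod (convex_Icc 0 1)
  have hpath : ∀ p q, p.1 = a → q.1 = b → ¬ JoinedIn (S \ Z) p q := by
    rintro p q hp hq ⟨γ, hγ⟩
    obtain ⟨s, hs, hsZ⟩ := hcross γ.extend γ.continuous_extend (fun s => (hγ (projIcc 0 1 _ s)).1)
      (by simpa using hp) (by simpa using hq)
    exact (hγ (projIcc 0 1 zero_le_one s)).2 hsZ
  obtain ⟨z₀, hz₀⟩ : Z.Nonempty := by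
    by_contra hne
    rw [not_nonempty_iff_eq_empty] at hne
    refine hpath (a, 0) (b, 0) rfl rfl ?_
    rw [hne, sdiff_empty]
    exact JoinedIn.of_segment_subset (hSconv.segment_subset
      (by simp [hS, hab]) (by simp [hS, hab]))
  -- the points that can be joined to the left base off `Z`
  let U : Set (ℝ × (Fin m → ℝ)) := {p | ∃ q, q.1 = a ∧ JoinedIn (S \ Z) q p}
  let d : ℝ × (Fin m → ℝ) → ℝ := fun p => Metric.infDist p Z
  -- the signed distance to `Z`
  let u : ℝ × (Fin m → ℝ) → ℝ := fun p => if p ∈ U then d p else - d p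
  -- a segment leaving `U` inside `S` meets `Z`
  have hmix : ∀ p ∈ S, ∀ q ∈ S, p ∈ U → q ∉ U → d p + d q ≤ dist p q := by
    intro p hp q hq hpU hqU
    obtain ⟨z, hz, hzZ⟩ : ∃ z ∈ segment ℝ p q, z ∈ Z := by
      by_contra! hno
      obtain ⟨o, ho, hop⟩ := hpU
      exact hqU ⟨o, ho, hop.trans (JoinedIn.of_segment_subset fun z hz =>
        ⟨hSconv.segment_subset hp hq hz, hno z hz⟩)⟩
    calc d p + d q ≤ dist p z + dist z q :=
          add_le_add (Metric.infDist_le_dist_of_mem hzZ)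
            (by rw [dist_comm]; exact Metric.infDist_le_dist_of_mem hzZ)
      _ = dist p q := dist_add_dist_of_mem_segment hz
  have hd0 : ∀ p, 0 ≤ d p := fun p => Metric.infDist_nonneg
  have hdLip : ∀ p q, d p - d q ≤ dist p q := fun p q => by
    have := Metric.infDist_le_infDist_add_dist (s := Z) (x := p) (y := q)
    simp only [d]; linarith
  have huLip : LipschitzOnWith 1 u S := by
    refine LipschitzOnWith.of_dist_le_mul fun p hp q hq => ?_
    rw [NNReal.coe_one, one_mul, Real.dist_eq, abs_le]
    have h1 := hdLip p q
    have h2 := hdLip q p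
    rw [dist_comm] at h2
    have h3 := hd0 p
    have h4 := hd0 q
    by_cases hpU : p ∈ U <;> by_cases hqU : q ∈ U
    · simp only [u, hpU, hqU, if_true]; constructor <;> linarith
    · have := hmix p hp q hq hpU hqU
      simp only [u, hpU, hqU, if_true, if_false]; constructor <;> linarith
    · have := hmix q hq p hp hqU hpU
      rw [dist_comm] at this
      simp only [u, hpU, hqU, if_true, if_false]; constructor <;> linarith
    · simp only [u, hpU, hqU, if_false]; constructor <;> linarith
  have hu0 : ∀ p, u p = 0 → p ∈ Z := by
    intro p hp
    have : d p = 0 := by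
      by_cases hpU : p ∈ U
      · simpa [u, hpU] using hp
      · simpa [u, hpU] using hp
    rw [← hZ.closure_eq, Metric.mem_closure_iff_infDist_zero ⟨z₀, hz₀⟩]
    exact this
  have hleft : ∀ p ∈ S, p.1 = a → u p < 0 → False := by
    intro p hp hpa hup
    by_cases hpZ : p ∈ Z
    · have : d p = 0 := Metric.infDist_zero_of_mem hpZ
      have : u p = 0 := by simp [u, this]
      linarith
    · have hpU : p ∈ U := ⟨p, hpa, JoinedIn.refl ⟨hp, hpZ⟩⟩
      have := hd0 p
      simp only [u, hpU, if_true] at hup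
      linarith
  have hright : ∀ p, p.1 = b → 0 < u p → False := by
    intro p hpb hup
    by_cases hpU : p ∈ U
    · obtain ⟨q, hq, hqp⟩ := hpU
      exact hpath q p hq hpb hqp
    · have := hd0 p
      simp only [u, hpU, if_false] at hup
      linarith
  -- clamping onto the box
  let c : ℝ → ℝ := fun t => max a (min b t)
  have hcI : ∀ t, c t ∈ Icc a b := fun t => ⟨le_max_left _ _, max_le hab (min_le_left _ _)⟩
  have hcid : ∀ t ∈ Icc a b, c t = t := fun t ht => by
    simp only [c]; rw [min_eq_right ht.2, max_eq_right ht.1]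
  let P : ℝ × (Fin m → ℝ) → ℝ × (Fin m → ℝ) := fun p => (c p.1, fun i => max 0 (min 1 (p.2 i)))
  have hPc : Continuous P := by fun_prop
  have hPS : ∀ p, P p ∈ S := fun p => ⟨hcI _, fun i => le_max_left _ _,
    fun i => max_le zero_le_one (min_le_left _ _)⟩
  have hPid : ∀ p ∈ S, P p = p := fun p hp => Prod.ext (hcid _ hp.1) (funext fun i => by
    have h1 : (0 : ℝ) ≤ p.2 i := hp.2.1 i
    have h2 : p.2 i ≤ (1 : ℝ) := hp.2.2 i
    simp only [P]
    rw [min_eq_right h2, max_eq_right h1])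
  let T : ℝ × (Fin m → ℝ) → ℝ × (Fin m → ℝ) := fun p => (c ((P p).1 + u (P p)), F (P p))
  have hT : Continuous T := by
    have huP : Continuous fun p => u (P p) := huLip.continuousOn.comp_continuous hPc hPS
    have hc : Continuous c := by fun_prop
    exact (hc.comp ((continuous_fst.comp hPc).add huP)).prodMk (hF.comp hPc)
  have hTS : ∀ p, T p ∈ S := fun p => ⟨hcI _, hF01 _⟩
  obtain ⟨r, hr⟩ := ((isCompact_Icc.prod isCompact_Icc : IsCompact S).isBounded).exists_norm_le
  obtain ⟨p, hp⟩ := brouwer hT (fun p => hr _ (hTS p))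
  have hpS : p ∈ S := hp ▸ hTS p
  simp only [T, hPid p hpS] at hp
  have hp1 : c (p.1 + u p) = p.1 := congrArg Prod.fst hp
  have hp2 : F p = p.2 := congrArg Prod.snd hp
  refine ⟨p, hu0 p ?_, hpS.1, hp2⟩
  obtain ⟨ha, hb⟩ := hpS.1
  rcases lt_trichotomy (u p) 0 with h | h | h
  · refine (hleft p hpS ?_ h).elim
    by_contra hpa
    have hlt : a < p.1 := lt_of_le_of_ne ha (Ne.symm hpa)
    simp only [c] at hp1
    rw [min_eq_right (by linarith)] at hp1
    have : max a (p.1 + u p) < p.1 := max_lt hlt (by linarith)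
    linarith
  · exact h
  · refine (hright p ?_ h).elim
    by_contra hpb
    have hlt : p.1 < b := lt_of_le_of_ne hb hpb
    have : p.1 < max a (min b (p.1 + u p)) := lt_max_of_lt_right (lt_min hlt (by linarith))
    simp only [c] at hp1
    linarith

/-- The crossing lemma over the Hilbert cube. Restricting to points with at most `n` nonzero
coordinates gives approximate solutions, which have a limit point by compactness. -/
theorem exists_fixed_of_crossing_nat {a b : ℝ} (hab : a ≤ b)
    (Z : Set (ℝ × (ℕ → ℝ))) (hZ : IsClosed Z)
    (F : ℝ × (ℕ → ℝ) → ℕ → ℝ) (hF : Continuous F) (hF01 : ∀ p, F p ∈ Icc 0 1)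
    (hcross : ∀ σ : ℝ → ℝ × (ℕ → ℝ), Continuous σ → (∀ s, (σ s).1 ∈ Icc a b) →
      (σ 0).1 = a → (σ 1).1 = b → ∃ s ∈ Icc (0 : ℝ) 1, σ s ∈ Z) :
    ∃ p ∈ Z, F p = p.2 := by
  have happ : ∀ n : ℕ, ∃ p ∈ Z, p ∈ Icc a b ×ˢ Icc (0 : ℕ → ℝ) 1 ∧ ∀ k < n, F p k = p.2 k := by
    intro n
    let j : ℝ × (Fin n → ℝ) → ℝ × (ℕ → ℝ) := fun p =>
      (p.1, fun k => if h : k < n then p.2 ⟨k, h⟩ else 0)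
    have hj : Continuous j := by
      refine continuous_fst.prodMk (continuous_pi fun k => ?_)
      by_cases h : k < n
      · simp only [h, dif_pos]; fun_prop
      · simp only [h, dif_neg, not_false_eq_true]; fun_prop
    obtain ⟨p, hpZ, hpab, hp⟩ := exists_fixed_of_crossing hab (j ⁻¹' Z) (hZ.preimage hj)
      (fun p i => F (j p) i) (by fun_prop)
      (fun p => ⟨fun i => (hF01 (j p)).1 i, fun i => (hF01 (j p)).2 i⟩)
      (fun σ hσ hσS h0 h1 => hcross (j ∘ σ) (hj.comp hσ) (fun s => (hσS s).1) h0 h1)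
    have hpk : ∀ k (h : k < n), F (j p) k = p.2 ⟨k, h⟩ := fun k h => congrFun hp ⟨k, h⟩
    refine ⟨j p, hpZ, ⟨hpab, fun k => ?_, fun k => ?_⟩, fun k hk => ?_⟩
    · by_cases h : k < n
      · simpa [j, h, ← hpk k h] using (hF01 (j p)).1 k
      · simp [j, h]
    · by_cases h : k < n
      · simpa [j, h, ← hpk k h] using (hF01 (j p)).2 k
      · simp [j, h]
    · rw [hpk k hk]; simp [j, hk]
  choose p hpZ hpS hpF using happ
  obtain ⟨q, -, θ, hθ, hq⟩ :=
    (isCompact_Icc.prod isCompact_Icc : IsCompact (Icc a b ×ˢ Icc (0 : ℕ → ℝ) 1)).tendsto_subseq hpS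
  refine ⟨q, hZ.mem_of_tendsto hq (Filter.Eventually.of_forall fun n => hpZ _), funext fun k => ?_⟩
  have h1 : Filter.Tendsto (fun n => F (p (θ n)) k) Filter.atTop (nhds (F q k)) :=
    ((continuous_apply k).comp hF).continuousAt.tendsto.comp hq
  have h2 : Filter.Tendsto (fun n => (p (θ n)).2 k) Filter.atTop (nhds (q.2 k)) :=
    ((continuous_apply k).comp continuous_snd).continuousAt.tendsto.comp hq
  refine tendsto_nhds_unique (h1.congr' ?_) h2
  filter_upwards [Filter.eventually_gt_atTop k] with n hn
  exact hpF _ k (hn.trans_le (hθ.le_apply))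

/-! ### Compact subsets of absolute retracts -/

/-- A compact set is embedded in the Hilbert cube by its truncated distances to a dense sequence. -/
theorem exists_embedding_compact {A : Type*} [MetricSpace A] {K : Set A} (hK : IsCompact K) :
    ∃ e : A → ℕ → ℝ, Continuous e ∧ (∀ x, e x ∈ Icc 0 1) ∧ InjOn e K := by
  have : CompactSpace K := isCompact_iff_compactSpace.1 hK
  rcases K.eq_empty_or_nonempty with rfl | hne
  · exact ⟨fun _ _ => 0, continuous_const, fun _ => ⟨le_rfl, zero_le_one⟩, injOn_empty _⟩
  have : Nonempty K := hne.to_subtype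
  let d : ℕ → K := TopologicalSpace.denseSeq K
  refine ⟨fun x n => min 1 (dist x (d n)), by fun_prop,
    fun x => ⟨fun n => le_min zero_le_one dist_nonneg, fun n => min_le_left _ _⟩, ?_⟩
  intro x hx y hy hxy
  by_contra hne
  have hpos : 0 < dist x y := dist_pos.2 hne
  obtain ⟨n, hn⟩ := (TopologicalSpace.denseRange_denseSeq K).exists_dist_lt (⟨x, hx⟩ : K)
    (show 0 < min 1 (dist x y / 2) by positivity)
  have hn : dist x (d n) < min 1 (dist x y / 2) := hn
  obtain ⟨h1, h2⟩ := lt_min_iff.1 hn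
  have h3 : min 1 (dist x (d n)) = min 1 (dist y (d n)) := congrFun hxy n
  rw [min_eq_right h1.le] at h3
  have h4 : dist y (d n) = dist x (d n) := by
    rcases min_choice 1 (dist y (d n : A)) with h | h <;> rw [h] at h3
    · linarith
    · exact h3.symm
  have := dist_triangle_right x y (d n)
  linarith

/-- The inverse of an embedding of a compact subset of an absolute retract extends to `ℕ → ℝ`. The
extension property is needed only for `ULift (ℕ → ℝ)`, so it may be assumed in any universe. -/
theorem exists_retraction.{u, v} {A : Type u} [TopologicalSpace A] (hAR : IsAbsoluteRetract.{u, v} A)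
    {K : Set A} (hK : IsCompact K) {e : A → ℕ → ℝ} (he : Continuous e) (hinj : InjOn e K) :
    ∃ r : (ℕ → ℝ) → A, Continuous r ∧ ∀ x ∈ K, r (e x) = x := by
  have : CompactSpace K := isCompact_iff_compactSpace.1 hK
  have hemb : Topology.IsClosedEmbedding (K.domRestrict e) :=
    (he.comp continuous_subtype_val).isClosedEmbedding (injOn_iff_injective.1 hinj)
  let H := hemb.isEmbedding.toHomeomorph
  let : MetricSpace (ℕ → ℝ) := TopologicalSpace.metrizableSpaceMetric (ℕ → ℝ)
  obtain ⟨r, hr, hre⟩ := hAR.2 (ULift.{v} (ℕ → ℝ)) (ULift.down ⁻¹' range (K.domRestrict e))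
    (hemb.isClosed_range.preimage continuous_uliftDown)
    (fun y => (H.symm ⟨y.1.down, y.2⟩ : K))
    (continuous_subtype_val.comp (H.symm.continuous.comp
      ((continuous_uliftDown.comp continuous_subtype_val).subtype_mk _)))
  refine ⟨fun q => r ⟨q⟩, hr.comp continuous_uliftUp, fun x hx => ?_⟩
  have h1 := hre ⟨⟨e x⟩, ⟨x, hx⟩, rfl⟩
  refine h1.trans ?_
  exact congrArg Subtype.val (H.symm_apply_apply ⟨x, hx⟩)

/-! ### The fixed point theorem -/

/-- **Corollary 2.7: stretching along paths on a set homeomorphic to a cylinder.** -/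
theorem fixed_point_homeomorphic_cylinder
    {Y : Type*} [MetricSpace Y]
    {A : Type*} [TopologicalSpace A] (hAR : IsAbsoluteRetract A)
    (a b : ℝ) (hab : a < b)
    (M : Set Y) (hM_closed : IsClosed M)
    -- h is a homeomorphism of M onto the cylinder C = [a,b] × A, with inverse g
    (h : Y → ℝ × A) (g : ℝ × A → Y)
    (hh_cont : ContinuousOn h M)
    (hg_cont : ContinuousOn g (Icc a b ×ˢ (univ : Set A)))
    (hh_mem : ∀ z ∈ M, h z ∈ Icc a b ×ˢ (univ : Set A))
    (hgh : ∀ z ∈ M, g (h z) = z)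
    (hg_mem : ∀ w ∈ Icc a b ×ˢ (univ : Set A), g w ∈ M)
    (hhg : ∀ w ∈ Icc a b ×ˢ (univ : Set A), h (g w) = w)
    (N : Set Y) (φ : Y → Y)
    (V : Set Y) (hV_closed : IsClosed V) (hV_sub : V ⊆ M ∩ N)
    -- (i) φ is compact on V
    (hφ_cont : ContinuousOn φ V) (hφ_comp : IsCompact (closure (φ '' V)))
    -- (ii) stretching along the paths, where M_l = {z ∈ M | (h z).1 = a} and
    -- M_r = {z ∈ M | (h z).1 = b}
    (hstretch : ∀ σ : ℝ → Y, ContinuousOn σ (Icc (0:ℝ) 1) →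
      σ '' Icc (0:ℝ) 1 ⊆ M →
      (σ '' Icc (0:ℝ) 1 ∩ {z ∈ M | (h z).1 = a}).Nonempty →
      (σ '' Icc (0:ℝ) 1 ∩ {z ∈ M | (h z).1 = b}).Nonempty →
      ∃ s₀ s₁ : ℝ, 0 ≤ s₀ ∧ s₀ ≤ s₁ ∧ s₁ ≤ 1 ∧
        σ '' Icc s₀ s₁ ⊆ V ∧
        φ '' (σ '' Icc s₀ s₁) ⊆ M ∧
        (φ '' (σ '' Icc s₀ s₁) ∩ {z ∈ M | (h z).1 = a}).Nonempty ∧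
        (φ '' (σ '' Icc s₀ s₁) ∩ {z ∈ M | (h z).1 = b}).Nonempty) :
    ∃ z ∈ V, φ z = z := by
  have := hAR.1
  let : MetricSpace A := TopologicalSpace.metrizableSpaceMetric A
  -- the compact set of `A`-coordinates of image points
  let K : Set A := (fun z => (h z).2) '' (closure (φ '' V) ∩ M)
  have hK : IsCompact K := (hφ_comp.inter_right hM_closed).image_of_continuousOn
    (continuous_snd.comp_continuousOn (hh_cont.mono inter_subset_right))
  obtain ⟨e, he, he01, hinj⟩ := exists_embedding_compact hK
  obtain ⟨r, hr, hre⟩ := exists_retraction hAR hK he hinj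
  -- pulling the problem back along `(t, q) ↦ g (t, r q)`
  let G : ℝ × (ℕ → ℝ) → Y := fun p => g (p.1, r p.2)
  let D : Set (ℝ × (ℕ → ℝ)) := {p | p.1 ∈ Icc a b}
  have hD : IsClosed D := isClosed_Icc.preimage continuous_fst
  have hGc : ContinuousOn G D := hg_cont.comp
    (continuous_fst.prodMk (hr.comp continuous_snd)).continuousOn fun p hp => ⟨hp, mem_univ _⟩
  have hGM : ∀ p ∈ D, G p ∈ M := fun p hp => hg_mem _ ⟨hp, mem_univ _⟩
  have hhG : ∀ p ∈ D, h (G p) = (p.1, r p.2) := fun p hp => hhg _ ⟨hp, mem_univ _⟩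
  let D₁ := D ∩ G ⁻¹' V
  have hD₁ : IsClosed D₁ := hGc.preimage_isClosed_of_isClosed hD hV_closed
  have hφG : ContinuousOn (fun p => φ (G p)) D₁ :=
    hφ_cont.comp (hGc.mono inter_subset_left) fun p hp => hp.2
  let D₂ := D₁ ∩ (fun p => φ (G p)) ⁻¹' M
  have hD₂ : IsClosed D₂ := hφG.preimage_isClosed_of_isClosed hD₁ hM_closed
  have hhφG : ContinuousOn (fun p => h (φ (G p))) D₂ :=
    hh_cont.comp (hφG.mono inter_subset_left) fun p hp => hp.2
  -- the parameters whose image has the same first coordinate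
  let Z := D₂ ∩ (fun p => (h (φ (G p))).1 - p.1) ⁻¹' {0}
  have hZ : IsClosed Z := ((continuous_fst.comp_continuousOn hhφG).sub
    continuous_fst.continuousOn).preimage_isClosed_of_isClosed hD₂ isClosed_singleton
  have hcross : ∀ σ : ℝ → ℝ × (ℕ → ℝ), Continuous σ → (∀ s, (σ s).1 ∈ Icc a b) →
      (σ 0).1 = a → (σ 1).1 = b → ∃ s ∈ Icc (0 : ℝ) 1, σ s ∈ Z := by
    intro σ hσ hσD h0 h1
    have hτ : Continuous (G ∘ σ) := hGc.comp_continuous hσ hσD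
    obtain ⟨s₀, s₁, hs₀, hs, hs₁, hV, hM, ⟨_, ⟨_, ⟨sl, hsl, rfl⟩, rfl⟩, hl⟩,
        ⟨_, ⟨_, ⟨sr, hsr, rfl⟩, rfl⟩, hr'⟩⟩ := hstretch (G ∘ σ) hτ.continuousOn
      (by rintro _ ⟨s, -, rfl⟩; exact hGM _ (hσD s))
      ⟨_, ⟨0, by simp, rfl⟩, hGM _ (hσD 0), by simp [hhG _ (hσD 0), h0]⟩
      ⟨_, ⟨1, by simp, rfl⟩, hGM _ (hσD 1), by simp [hhG _ (hσD 1), h1]⟩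
    have hmem : ∀ s ∈ Icc s₀ s₁, σ s ∈ D₂ := fun s hs =>
      ⟨⟨hσD s, hV ⟨s, hs, rfl⟩⟩, hM ⟨_, ⟨s, hs, rfl⟩, rfl⟩⟩
    have hcont : ContinuousOn (fun s => (h (φ (G (σ s)))).1 - (σ s).1) (Icc s₀ s₁) :=
      (continuous_fst.comp_continuousOn (hhφG.comp hσ.continuousOn hmem)).sub
        (continuous_fst.comp hσ).continuousOn
    obtain ⟨s, hss, hs0⟩ := isPreconnected_Icc.intermediate_value hsl hsr hcont
      (show (0 : ℝ) ∈ Icc _ _ from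
        ⟨by have := hl.2; simp only [Function.comp] at this; linarith [(hσD sl).1],
         by have := hr'.2; simp only [Function.comp] at this; linarith [(hσD sr).2]⟩)
    exact ⟨s, ⟨hs₀.trans hss.1, hss.2.trans hs₁⟩, hmem s hss, hs0⟩
  have hF₀ : ContinuousOn (fun p => e (h (φ (G p))).2) Z :=
    (he.comp continuous_snd).comp_continuousOn (hhφG.mono inter_subset_left)
  obtain ⟨F, hF⟩ := ContinuousMap.exists_restrict_eq hZ ⟨_, hF₀.domRestrict⟩
  have hFZ : ∀ p ∈ Z, F p = e (h (φ (G p))).2 := fun p hp =>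
    DFunLike.congr_fun hF (⟨p, hp⟩ : Z)
  obtain ⟨p, hpZ, hp⟩ := exists_fixed_of_crossing_nat hab.le Z hZ
    (fun p k => max 0 (min 1 (F p k))) (by fun_prop)
    (fun p => ⟨fun k => le_max_left _ _, fun k => max_le zero_le_one (min_le_left _ _)⟩) hcross
  have hpe : e (h (φ (G p))).2 = p.2 := by
    rw [← hp]
    funext k
    have h0 := (he01 (h (φ (G p))).2).1 k
    have h1 := (he01 (h (φ (G p))).2).2 k
    simp only [Pi.zero_apply, Pi.one_apply] at h0 h1
    rw [hFZ p hpZ, min_eq_right h1, max_eq_right h0]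
  obtain ⟨⟨⟨hpD, hpV⟩, hpM⟩, hpt⟩ := hpZ
  have hpt : (h (φ (G p))).1 = p.1 := sub_eq_zero.1 hpt
  -- the second coordinates agree because the image lies in `K`, where `r` inverts `e`
  have hrp : r p.2 = (h (φ (G p))).2 := by
    rw [← hpe]
    exact hre _ ⟨_, ⟨subset_closure ⟨_, hpV, rfl⟩, hpM⟩, rfl⟩
  refine ⟨G p, hpV, ?_⟩
  have hpM : φ (G p) ∈ M := hpM
  have heq : h (φ (G p)) = h (G p) := by
    rw [hhG p hpD]
    exact Prod.ext hpt hrp.symm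
  rw [← hgh _ hpM, heq, hgh _ (hGM p hpD)]
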